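/- (Theorem 1, part 3) For every model M and hybrid formula φ: I have a winning strategy for the semantic game G(M, (P : φ)) if and only if M ⊨ φ, i.e., φ is true at every world of M. -/

import Mathlib

/-- Hybrid logic formulas over nominals `ℕ` and propositional variables `ℕ`
(the two sorts are kept disjoint by the constructors). -/
inductive Form : Type where
  | prop : ℕ → Form
  | nom : ℕ → Form
  | rel : ℕ → ℕ → Form
  | and : Form → Form → Form
  | or : Form → Form → Form
  | imp : Form → Form → Form
  | neg : Form → Form
  | at_ : ℕ → Form → Form
  | box : Form → Form
  | dia : Form → Form

/-- A model for hybrid logic: a nonempty set of worlds, an accessibility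
relation, a valuation and an assignment of nominals to worlds. -/
structure Model where
  W : Type
  ne : Nonempty W
  R : W → W → Prop
  V : ℕ → W → Prop
  g : ℕ → W

/-- Satisfaction of a formula at a world of a model. -/
def sat (M : Model) : M.W → Form → Prop
  | w, .prop p => M.V p w
  | w, .nom i => M.g i = w
  | _, .rel i j => M.R (M.g i) (M.g j)
  | w, .and φ ψ => sat M w φ ∧ sat M w ψ
  | w, .or φ ψ => sat M w φ ∨ sat M w ψ
  | w, .imp φ ψ => ¬ sat M w φ ∨ sat M w ψ
  | w, .neg φ => ¬ sat M w φ
  | _, .at_ i φ => sat M (M.g i) φ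
  | w, .box φ => ∀ v, M.R w v → sat M v φ
  | w, .dia φ => ∃ v, M.R w v ∧ sat M v φ

/-- A model is named iff every world has a name, i.e. the assignment is surjective. -/
def Model.Named (M : Model) : Prop := Function.Surjective M.g

/-- A formula is valid iff it is true at every world of every model. -/
def Valid (φ : Form) : Prop := ∀ (M : Model) (w : M.W), sat M w φ

/-- Roles: `pro` means I am the proponent (`P`-state), `opp` that I am the opponent (`O`-state). -/
inductive Role : Type where
  | pro : Role
  | opp : Role

/-- Game states of the semantic game over a model: `loc r w φ` is the state
`Q, w : φ` and `glob r φ` is the state `Q : φ` (with `Q = P` for `r = pro`, `Q = O` for `r = opp`). -/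
inductive GState (M : Model) : Type where
  | loc : Role → M.W → Form → GState M
  | glob : Role → Form → GState M

/-- `IWins M s` holds iff I have a winning strategy for the semantic game `G(M, s)`:
a subtree of the game tree keeping exactly one child of every non-leaf node labelled "I"
(and all children of nodes labelled "Y"), all of whose leaves are labelled "I".
Each constructor corresponds to one game rule: at "I"-nodes I pick one child in which
I have a winning strategy; at "Y"-nodes I must have a winning strategy in every child;
leaves must be labelled "I". -/
inductive IWins (M : Model) : GState M → Prop where
  -- elementary leaves
  | proProp {w p} : M.V p w → IWins M (.loc .pro w (.prop p))
  | oppProp {w p} : ¬ M.V p w → IWins M (.loc .opp w (.prop p))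
  | proNom {w i} : M.g i = w → IWins M (.loc .pro w (.nom i))
  | oppNom {w i} : M.g i ≠ w → IWins M (.loc .opp w (.nom i))
  | proRel {w : M.W} {i j} : M.R (M.g i) (M.g j) → IWins M (.loc .pro w (.rel i j))
  | oppRel {w : M.W} {i j} : ¬ M.R (M.g i) (M.g j) → IWins M (.loc .opp w (.rel i j))
  -- disjunction
  | proOrL {w φ ψ} : IWins M (.loc .pro w φ) → IWins M (.loc .pro w (.or φ ψ))
  | proOrR {w φ ψ} : IWins M (.loc .pro w ψ) → IWins M (.loc .pro w (.or φ ψ))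
  | oppOr {w φ ψ} : IWins M (.loc .opp w φ) → IWins M (.loc .opp w ψ) →
      IWins M (.loc .opp w (.or φ ψ))
  -- conjunction
  | proAnd {w φ ψ} : IWins M (.loc .pro w φ) → IWins M (.loc .pro w ψ) →
      IWins M (.loc .pro w (.and φ ψ))
  | oppAndL {w φ ψ} : IWins M (.loc .opp w φ) → IWins M (.loc .opp w (.and φ ψ))
  | oppAndR {w φ ψ} : IWins M (.loc .opp w ψ) → IWins M (.loc .opp w (.and φ ψ))
  -- implication
  | proImpL {w φ ψ} : IWins M (.loc .opp w φ) → IWins M (.loc .pro w (.imp φ ψ))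
  | proImpR {w φ ψ} : IWins M (.loc .pro w ψ) → IWins M (.loc .pro w (.imp φ ψ))
  | oppImp {w φ ψ} : IWins M (.loc .pro w φ) → IWins M (.loc .opp w ψ) →
      IWins M (.loc .opp w (.imp φ ψ))
  -- negation (role switch)
  | proNeg {w φ} : IWins M (.loc .opp w φ) → IWins M (.loc .pro w (.neg φ))
  | oppNeg {w φ} : IWins M (.loc .pro w φ) → IWins M (.loc .opp w (.neg φ))
  -- @-operator
  | proAt {w i φ} : IWins M (.loc .pro (M.g i) φ) → IWins M (.loc .pro w (.at_ i φ))
  | oppAt {w i φ} : IWins M (.loc .opp (M.g i) φ) → IWins M (.loc .opp w (.at_ i φ))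
  -- box: for `P` a "Y"-node over all successors (a leaf labelled "I" if there are none);
  -- for `O` an "I"-node over all successors (a leaf labelled "Y" if there are none)
  | proBox {w φ} : (∀ v, M.R w v → IWins M (.loc .pro v φ)) → IWins M (.loc .pro w (.box φ))
  | oppBox {w φ} (v) : M.R w v → IWins M (.loc .opp v φ) → IWins M (.loc .opp w (.box φ))
  -- diamond: dual to box
  | proDia {w φ} (v) : M.R w v → IWins M (.loc .pro v φ) → IWins M (.loc .pro w (.dia φ))
  | oppDia {w φ} : (∀ v, M.R w v → IWins M (.loc .opp v φ)) → IWins M (.loc .opp w (.dia φ))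
  -- global states
  | proGlob {φ} : (∀ w, IWins M (.loc .pro w φ)) → IWins M (.glob .pro φ)
  | oppGlob {φ} (w) : IWins M (.loc .opp w φ) → IWins M (.glob .opp φ)

theorem aux_sound (M : Model) (s : GState M) (h : IWins M s) :
    (match s with
      | .loc .pro w φ => sat M w φ
      | .loc .opp w φ => ¬ sat M w φ
      | .glob .pro φ => ∀ w, sat M w φ
      | .glob .opp φ => ∃ w, ¬ sat M w φ) := by
  induction h <;> simp only [sat] at * <;> first | assumption | grind

theorem aux_complete (M : Model) (φ : Form) : ∀ w : M.W,
    (sat M w φ → IWins M (.loc .pro w φ)) ∧ (¬ sat M w φ → IWins M (.loc .opp w φ)) := by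
  induction φ with
  | prop p => exact fun w => ⟨.proProp, .oppProp⟩
  | nom i => exact fun w => ⟨.proNom, .oppNom⟩
  | rel i j => exact fun w => ⟨.proRel, .oppRel⟩
  | and a b iha ihb =>
    intro w
    refine ⟨fun h => .proAnd ((iha w).1 h.1) ((ihb w).1 h.2), fun h => ?_⟩
    by_cases ha : sat M w a
    · exact .oppAndR ((ihb w).2 fun hb => h ⟨ha, hb⟩)
    · exact .oppAndL ((iha w).2 ha)
  | or a b iha ihb =>
    intro w
    refine ⟨fun h => ?_, fun h => .oppOr ((iha w).2 fun x => h (Or.inl x))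
      ((ihb w).2 fun x => h (Or.inr x))⟩
    rcases h with h | h
    · exact .proOrL ((iha w).1 h)
    · exact .proOrR ((ihb w).1 h)
  | imp a b iha ihb =>
    intro w
    refine ⟨fun h => ?_, fun h => .oppImp
      ((iha w).1 (by by_contra x; exact h (Or.inl x))) ((ihb w).2 fun x => h (Or.inr x))⟩
    rcases h with h | h
    · exact .proImpL ((iha w).2 h)
    · exact .proImpR ((ihb w).1 h)
  | neg a ih =>
    exact fun w => ⟨fun h => .proNeg ((ih w).2 h), fun h => .oppNeg ((ih w).1 (not_not.1 h))⟩
  | at_ i a ih =>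
    exact fun w => ⟨fun h => .proAt ((ih _).1 h), fun h => .oppAt ((ih _).2 h)⟩
  | box a ih =>
    intro w
    refine ⟨fun h => .proBox fun v hv => (ih v).1 (h v hv), fun h => ?_⟩
    simp only [sat, not_forall] at h
    obtain ⟨v, hv, hn⟩ := h
    exact .oppBox v hv ((ih v).2 hn)
  | dia a ih =>
    intro w
    refine ⟨fun h => ?_, fun h => .oppDia fun v hv => (ih v).2 fun x => h ⟨v, hv, x⟩⟩
    obtain ⟨v, hv, hn⟩ := h
    exact .proDia v hv ((ih v).1 hn)

/-- (Theorem 1, part 3) I have a winning strategy for `G(M, (P : φ))` iff `M ⊨ φ`,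
i.e. `φ` is true at every world of `M`. -/
theorem iWins_glob_iff_true (M : Model) (φ : Form) :
    IWins M (.glob .pro φ) ↔ ∀ w : M.W, sat M w φ := by
  exact ⟨fun h => aux_sound M _ h, fun h => .proGlob fun w => (aux_complete M φ w).1 (h w)⟩
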